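/- For every m ∈ ℕ and every n ≥ 4 (as well as for an unbounded number of components), the family of languages of index at most m generated by CD grammar systems with at most n context-free components working in the (t∧=m)-mode is strictly contained in the unrestricted family: L_m(CD_n, CF[−λ], (t∧=m)) ⊊ L(CD_n, CF[−λ], (t∧=m)), both with and without erasing rules. -/

import Mathlib

namespace CDHybrid

/-- Symbols: nonterminals are natural numbers, terminals come from `T`. -/
abbrev Symb (T : Type) := ℕ ⊕ T

/-- Sentential forms. -/
abbrev SForm (T : Type) := List (Symb T)

/-- A context-free rule `A → z`. -/
abbrev Rule (T : Type) := ℕ × SForm T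

/-- Number of nonterminal occurrences in a sentential form. -/
def ntCount {T : Type} (x : SForm T) : ℕ := (x.filter Sum.isLeft).length

/-- One rewriting step using some rule of the rule set `P`. -/
def RStep {T : Type} (P : List (Rule T)) (x y : SForm T) : Prop :=
  ∃ r ∈ P, ∃ u v : SForm T, x = u ++ Sum.inl r.1 :: v ∧ y = u ++ r.2 ++ v

/-- `m`-step derivation using only rules of `P`. -/
def StepsN {T : Type} (P : List (Rule T)) : ℕ → SForm T → SForm T → Prop
  | 0, x, y => x = y
  | m + 1, x, y => ∃ z, RStep P x z ∧ StepsN P m z y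

/-- `m`-step derivation using only rules of `P`, all intermediate (and the final)
sentential forms having at most `b` occurrences of nonterminals. -/
def StepsNB {T : Type} (P : List (Rule T)) (b : ℕ) : ℕ → SForm T → SForm T → Prop
  | 0, x, y => x = y
  | m + 1, x, y => ∃ z, RStep P x z ∧ ntCount z ≤ b ∧ StepsNB P b m z y

/-- Derivation modes of CD grammar systems. -/
inductive Mode where
  | eq : ℕ → Mode
  | le : ℕ → Mode
  | ge : ℕ → Mode
  | star : Mode
  | t : Mode
  | conj : Mode → Mode → Mode

/-- The predicate of a derivation mode: `modeOK P f m y` holds if an `m`-step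
derivation by the component `P` ending in `y` is acceptable for mode `f`. -/
def modeOK {T : Type} (P : List (Rule T)) : Mode → ℕ → SForm T → Prop
  | .eq k, m, _ => m = k
  | .le k, m, _ => m ≤ k
  | .ge k, m, _ => k ≤ m
  | .star, _, _ => True
  | .t, _, y => ¬ ∃ z, RStep P y z
  | .conj f g, m, y => modeOK P f m y ∧ modeOK P g m y

/-- A CD grammar system with context-free components. -/
structure CDGS (T : Type) where
  deg : ℕ
  start : ℕ
  comp : Fin deg → List (Rule T)

/-- λ-freeness: no erasing rules. -/
def CDGS.LamFree {T : Type} (G : CDGS T) : Prop :=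
  ∀ i : Fin G.deg, ∀ r ∈ G.comp i, r.2 ≠ []

/-- One derivation step of a component of `G` in mode `f`. -/
def CDGS.ModeStep {T : Type} (G : CDGS T) (f : Mode) (x y : SForm T) : Prop :=
  ∃ i : Fin G.deg, ∃ m : ℕ, StepsN (G.comp i) m x y ∧ modeOK (G.comp i) f m y

/-- One derivation step of a component of `G` in mode `f`, with all produced
sentential forms having at most `b` nonterminal occurrences. -/
def CDGS.ModeStepB {T : Type} (G : CDGS T) (f : Mode) (b : ℕ) (x y : SForm T) : Prop :=
  ∃ i : Fin G.deg, ∃ m : ℕ, StepsNB (G.comp i) b m x y ∧ modeOK (G.comp i) f m y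

/-- The language generated by `G` in mode `f`. -/
def CDGS.lang {T : Type} (G : CDGS T) (f : Mode) : Set (List T) :=
  { w | Relation.TransGen (G.ModeStep f) [Sum.inl G.start] (w.map Sum.inr) }

/-- The words of the language of `G` in mode `f` possessing a derivation of index
at most `b`, i.e., all sentential forms occurring in it have at most `b`
nonterminal occurrences. -/
def CDGS.langB {T : Type} (G : CDGS T) (f : Mode) (b : ℕ) : Set (List T) :=
  { w | ntCount ([Sum.inl G.start] : SForm T) ≤ b ∧
      Relation.TransGen (G.ModeStepB f b) [Sum.inl G.start] (w.map Sum.inr) }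

/-- Two languages are considered equal iff they differ at most in the empty word. -/
def EqL {T : Type} (L₁ L₂ : Set (List T)) : Prop := L₁ \ {[]} = L₂ \ {[]}

/-- The family `L(CD_n, CF[−λ], f)`; `lf = true` forbids erasing rules. -/
def CDFam (T : Type) (lf : Bool) (n : ℕ) (f : Mode) : Set (Set (List T)) :=
  { L | ∃ G : CDGS T, G.deg ≤ n ∧ (lf = true → G.LamFree) ∧ EqL (G.lang f) L }

/-- The family `L(CD_∞, CF[−λ], f)`. -/
def CDFamInf (T : Type) (lf : Bool) (f : Mode) : Set (Set (List T)) :=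
  { L | ∃ G : CDGS T, (lf = true → G.LamFree) ∧ EqL (G.lang f) L }

/-- The family `L_m(CD_n, CF[−λ], f)` of such languages of index at most `m`. -/
def CDFamInd (T : Type) (lf : Bool) (n : ℕ) (f : Mode) (m : ℕ) : Set (Set (List T)) :=
  { L | ∃ G : CDGS T, G.deg ≤ n ∧ (lf = true → G.LamFree) ∧ EqL (G.lang f) L ∧
      G.lang f ⊆ G.langB f m }

/-- The family `L_m(CD_∞, CF[−λ], f)`. -/
def CDFamIndInf (T : Type) (lf : Bool) (f : Mode) (m : ℕ) : Set (Set (List T)) :=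
  { L | ∃ G : CDGS T, (lf = true → G.LamFree) ∧ EqL (G.lang f) L ∧ G.lang f ⊆ G.langB f m }

/-- The family `L_fin(CD_∞, CF[−λ], f)`. -/
def CDFamFinInf (T : Type) (lf : Bool) (f : Mode) : Set (Set (List T)) :=
  { L | ∃ m : ℕ, 1 ≤ m ∧ L ∈ CDFamIndInf T lf f m }

/-- A context-free grammar. -/
structure CFG (T : Type) where
  start : ℕ
  rules : List (Rule T)

/-- The language generated by a context-free grammar. -/
def CFG.lang {T : Type} (G : CFG T) : Set (List T) :=
  { w | Relation.ReflTransGen (RStep G.rules) [Sum.inl G.start] (w.map Sum.inr) }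

/-- The words of `G.lang` having a derivation of index at most `m`. -/
def CFG.langB {T : Type} (G : CFG T) (m : ℕ) : Set (List T) :=
  { w | ntCount ([Sum.inl G.start] : SForm T) ≤ m ∧
      Relation.ReflTransGen (fun x y => RStep G.rules x y ∧ ntCount y ≤ m)
        [Sum.inl G.start] (w.map Sum.inr) }

/-- The family `L(CF)` of context-free languages. -/
def CFFam (T : Type) : Set (Set (List T)) := { L | ∃ G : CFG T, EqL G.lang L }

/-- The family `L_m(CF)` of context-free languages of index at most `m`. -/
def CFFamInd (T : Type) (m : ℕ) : Set (Set (List T)) :=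
  { L | ∃ G : CFG T, EqL G.lang L ∧ G.lang ⊆ G.langB m }

/-- The family `L_fin(CF)` of context-free languages of finite index. -/
def CFFamFin (T : Type) : Set (Set (List T)) :=
  { L | ∃ m : ℕ, 1 ≤ m ∧ L ∈ CFFamInd T m }

/-- A grammar is linear if every right-hand side contains at most one nonterminal. -/
def CFG.Linear {T : Type} (G : CFG T) : Prop := ∀ r ∈ G.rules, ntCount r.2 ≤ 1

/-- The family `L(LIN)` of linear context-free languages. -/
def LinFam (T : Type) : Set (Set (List T)) :=
  { L | ∃ G : CFG T, G.Linear ∧ EqL G.lang L }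

/-- The family `L(FIN)` of finite languages. -/
def FinFam (T : Type) : Set (Set (List T)) := { L | L.Finite }

/-- A programmed grammar with context-free rules. -/
structure PG (T : Type) where
  start : ℕ
  nLab : ℕ
  rule : Fin nLab → Rule T
  succ : Fin nLab → Set (Fin nLab)
  fail : Fin nLab → Set (Fin nLab)

def PG.LamFree {T : Type} (G : PG T) : Prop := ∀ r : Fin G.nLab, (G.rule r).2 ≠ []

/-- No appearance checking: all failure fields are empty. -/
def PG.NoAC {T : Type} (G : PG T) : Prop := ∀ r : Fin G.nLab, G.fail r = ∅

/-- One step of a programmed grammar on pairs (sentential form, label). -/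
def PG.PStep {T : Type} (G : PG T) (p q : SForm T × Fin G.nLab) : Prop :=
  (∃ u v : SForm T, p.1 = u ++ Sum.inl (G.rule p.2).1 :: v ∧
      q.1 = u ++ (G.rule p.2).2 ++ v ∧ q.2 ∈ G.succ p.2) ∨
  (Sum.inl (G.rule p.2).1 ∉ p.1 ∧ q.1 = p.1 ∧ q.2 ∈ G.fail p.2)

/-- The language generated by a programmed grammar. -/
def PG.lang {T : Type} (G : PG T) : Set (List T) :=
  { w | ∃ r₁ r₂ : Fin G.nLab,
      Relation.ReflTransGen G.PStep ([Sum.inl G.start], r₁) (w.map Sum.inr, r₂) }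

/-- The words of `G.lang` having a derivation of index at most `m`. -/
def PG.langB {T : Type} (G : PG T) (m : ℕ) : Set (List T) :=
  { w | ∃ r₁ r₂ : Fin G.nLab, ntCount ([Sum.inl G.start] : SForm T) ≤ m ∧
      Relation.ReflTransGen (fun p q => G.PStep p q ∧ ntCount q.1 ≤ m)
        ([Sum.inl G.start], r₁) (w.map Sum.inr, r₂) }

/-- The family `L_m(P, CF[−λ][, ac])`: programmed languages of index at most `m`;
`ac = false` forbids appearance checking, `lf = true` forbids erasing rules. -/
def PFamInd (T : Type) (lf ac : Bool) (m : ℕ) : Set (Set (List T)) :=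
  { L | ∃ G : PG T, (lf = true → G.LamFree) ∧ (ac = false → G.NoAC) ∧
      EqL G.lang L ∧ G.lang ⊆ G.langB m }

/-- The family `L_fin(P, CF[−λ][, ac])` of programmed languages of finite index. -/
def PFamFin (T : Type) (lf ac : Bool) : Set (Set (List T)) :=
  { L | ∃ m : ℕ, 1 ≤ m ∧ L ∈ PFamInd T lf ac m }


open List

/-- Nonterminal pattern. -/
def pat (x : SForm ℕ) : List ℕ := x.filterMap Sum.getLeft?

/-- Terminal count. -/
def tc (a : ℕ) (x : SForm ℕ) : ℕ := (x.filterMap Sum.getRight?).count a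

lemma pat_append (x y : SForm ℕ) : pat (x ++ y) = pat x ++ pat y := by simp [pat]

lemma tc_append (a : ℕ) (x y : SForm ℕ) : tc a (x ++ y) = tc a x + tc a y := by simp [tc]

lemma tc_inl (a A : ℕ) (x : SForm ℕ) : tc a (Sum.inl A :: x) = tc a x := rfl

lemma tc_map (a : ℕ) (w : List ℕ) : tc a (w.map Sum.inr) = w.count a := by
  unfold tc
  congr 1
  induction w with
  | nil => rfl
  | cons b w ih => exact congrArg (List.cons b) ih

lemma pat_split (x u v : SForm ℕ) (A : ℕ) (h : pat x = pat (u ++ Sum.inl A :: v)) :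
    ∃ u' v', x = u' ++ Sum.inl A :: v' ∧ pat u' = pat u ∧ pat v' = pat v := by
  rw [pat_append] at h
  have h2 : pat (Sum.inl A :: v) = A :: pat v := by simp [pat]
  rw [h2] at h
  unfold pat at h
  rw [List.filterMap_eq_append_iff] at h
  obtain ⟨l1, l2, rfl, h1, h3⟩ := h
  rw [List.filterMap_eq_cons_iff] at h3
  obtain ⟨l3, s, l4, rfl, h4, h5, h6⟩ := h3
  have hs : s = Sum.inl A := by
    cases s with
    | inl B => simpa using h5
    | inr b => simp at h5
  subst hs
  refine ⟨l1 ++ l3, l4, by simp, ?_, h6⟩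
  have : pat l3 = [] := by
    unfold pat
    rw [List.filterMap_eq_nil_iff]
    exact h4
  rw [pat_append, this]
  simpa [pat] using h1

lemma rstep_mix {P : List (Rule ℕ)} {x z x' : SForm ℕ} (h : RStep P x z) (hp : pat x' = pat x) :
    ∃ z', RStep P x' z' ∧ pat z' = pat z ∧ ∀ a, tc a z' + tc a x = tc a z + tc a x' := by
  obtain ⟨r, hr, u, v, rfl, rfl⟩ := h
  obtain ⟨u', v', rfl, h1, h2⟩ := pat_split _ _ _ _ hp
  refine ⟨u' ++ r.2 ++ v', ⟨r, hr, u', v', rfl, rfl⟩, ?_, ?_⟩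
  · simp [pat_append, h1, h2]
  · intro a
    simp only [tc_append, tc_inl]
    omega

lemma stepsN_mix {P : List (Rule ℕ)} (k : ℕ) : ∀ {x z x' : SForm ℕ}, StepsN P k x z →
    pat x' = pat x →
    ∃ z', StepsN P k x' z' ∧ pat z' = pat z ∧ ∀ a, tc a z' + tc a x = tc a z + tc a x' := by
  induction k with
  | zero =>
    intro x z x' h hp
    cases h
    exact ⟨x', rfl, hp, fun a => by omega⟩
  | succ k ih =>
    intro x z x' h hp
    obtain ⟨y, h1, h2⟩ := h
    obtain ⟨y', h3, h4, h5⟩ := rstep_mix h1 hp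
    obtain ⟨z', h6, h7, h8⟩ := ih h2 h4
    refine ⟨z', ⟨y', h3, h6⟩, h7, fun a => ?_⟩
    have := h5 a
    have := h8 a
    omega

/-- The mode used. -/
abbrev tm (m : ℕ) : Mode := Mode.conj Mode.t (Mode.eq m)

lemma modeStep_mix {G : CDGS ℕ} {m : ℕ} {x z x' : SForm ℕ} (h : G.ModeStep (tm m) x z)
    (hp : pat x' = pat x) :
    ∃ z', G.ModeStep (tm m) x' z' ∧ pat z' = pat z ∧
      ∀ a, tc a z' + tc a x = tc a z + tc a x' := by
  obtain ⟨i, k, h1, h2, h3⟩ := h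
  obtain ⟨z', h4, h5, h6⟩ := stepsN_mix k h1 hp
  refine ⟨z', ⟨i, k, h4, ?_, h3⟩, h5, h6⟩
  rintro ⟨q, hq⟩
  obtain ⟨q', hq', -⟩ := rstep_mix hq h5.symm
  exact h2 ⟨q', hq'⟩

lemma rtg_mix {G : CDGS ℕ} {m : ℕ} {x z x' : SForm ℕ}
    (h : Relation.ReflTransGen (G.ModeStep (tm m)) x z) (hp : pat x' = pat x) :
    ∃ z', Relation.ReflTransGen (G.ModeStep (tm m)) x' z' ∧ pat z' = pat z ∧
      ∀ a, tc a z' + tc a x = tc a z + tc a x' := by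
  induction h with
  | refl => exact ⟨x', .refl, hp, fun a => by omega⟩
  | tail _ h2 ih =>
    obtain ⟨y', h3, h4, h5⟩ := ih
    obtain ⟨z', h6, h7, h8⟩ := modeStep_mix h2 h4
    refine ⟨z', h3.tail h6, h7, fun a => ?_⟩
    have := h5 a
    have := h8 a
    omega

lemma pat_nil {x : SForm ℕ} (h : pat x = []) : ∃ w : List ℕ, x = w.map Sum.inr := by
  induction x with
  | nil => exact ⟨[], rfl⟩
  | cons s x ih =>
    cases s with
    | inl A => simp [pat] at h
    | inr a =>
      obtain ⟨w, rfl⟩ := ih (by simpa [pat] using h)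
      exact ⟨a :: w, rfl⟩

lemma pat_map (w : List ℕ) : pat (w.map Sum.inr) = [] := by
  simp [pat]

/-- Replacing nonterminals by words. -/
inductive Mt : SForm ℕ → List ℕ → Prop
  | nil : Mt [] []
  | ter (a : ℕ) {x : SForm ℕ} {w : List ℕ} : Mt x w → Mt (Sum.inr a :: x) (a :: w)
  | non (A : ℕ) (y : List ℕ) {x : SForm ℕ} {w : List ℕ} : Mt x w → Mt (Sum.inl A :: x) (y ++ w)

lemma Mt.app {u v : SForm ℕ} {w1 w2 : List ℕ} (h1 : Mt u w1) (h2 : Mt v w2) :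
    Mt (u ++ v) (w1 ++ w2) := by
  induction h1 with
  | nil => exact h2
  | ter a _ ih => exact Mt.ter a ih
  | non A y _ ih => rw [List.append_assoc]; exact Mt.non A y ih

lemma Mt.split {u v : SForm ℕ} {w : List ℕ} (h : Mt (u ++ v) w) :
    ∃ w1 w2, w = w1 ++ w2 ∧ Mt u w1 ∧ Mt v w2 := by
  induction u generalizing w with
  | nil => exact ⟨[], w, rfl, .nil, h⟩
  | cons s u ih =>
    rw [List.cons_append] at h
    cases h with
    | ter a h =>
      obtain ⟨w1, w2, rfl, h1, h2⟩ := ih h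
      exact ⟨a :: w1, w2, rfl, .ter a h1, h2⟩
    | non A y h =>
      obtain ⟨w1, w2, rfl, h1, h2⟩ := ih h
      exact ⟨y ++ w1, w2, by simp, .non A y h1, h2⟩

lemma Mt.rstep {P : List (Rule ℕ)} {x y : SForm ℕ} {w : List ℕ} (h : RStep P x y) (hm : Mt y w) :
    Mt x w := by
  obtain ⟨r, -, u, v, rfl, rfl⟩ := h
  obtain ⟨w1, w3, rfl, h1, h3⟩ := hm.split
  obtain ⟨w1, w2, rfl, h1, h2⟩ := h1.split
  rw [List.append_assoc]
  exact h1.app (.non _ _ h3)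

lemma Mt.stepsN {P : List (Rule ℕ)} {w : List ℕ} (k : ℕ) : ∀ {x y : SForm ℕ}, StepsN P k x y →
    Mt y w → Mt x w := by
  induction k with
  | zero => intro x y h hm; cases h; exact hm
  | succ k ih =>
    intro x y h hm
    obtain ⟨z, h1, h2⟩ := h
    exact Mt.rstep h1 (ih h2 hm)

lemma Mt.rtg {G : CDGS ℕ} {f : Mode} {x : SForm ℕ} {w : List ℕ}
    (h : Relation.ReflTransGen (G.ModeStep f) x (w.map Sum.inr)) : Mt x w := by
  have h0 : Mt (w.map Sum.inr) w := by
    clear h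
    induction w with
    | nil => exact .nil
    | cons a w ih => exact .ter a ih
  induction h using Relation.ReflTransGen.head_induction_on with
  | refl => exact h0
  | head h1 _ ih =>
    obtain ⟨i, k, h2, -⟩ := h1
    exact Mt.stepsN k h2 ih

lemma Mt.gaps {x : SForm ℕ} {w : List ℕ} (h : Mt x w) :
    ∃ ys : List (List ℕ), ys.length = ntCount x ∧
      (∀ j, tc j x + (ys.map (List.count j)).sum = w.count j) ∧ ∀ y ∈ ys, y <:+: w := by
  induction h with
  | nil => exact ⟨[], rfl, by simp [tc], by simp⟩
  | @ter a x w _ ih =>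
    obtain ⟨ys, h1, h2, h3⟩ := ih
    refine ⟨ys, by simpa [ntCount] using h1, fun j => ?_, fun y hy => ?_⟩
    · have := h2 j
      have h5 : tc j (Sum.inr a :: x) = tc j x + if a == j then 1 else 0 := by
        simp [tc, List.count_cons]
      rw [h5, List.count_cons]
      omega
    · exact (h3 y hy).trans (List.suffix_cons a w).isInfix
  | @non A y x w _ ih =>
    obtain ⟨ys, h1, h2, h3⟩ := ih
    refine ⟨y :: ys, by simpa [ntCount, List.filter_cons] using h1, fun j => ?_, fun y' hy => ?_⟩
    · have := h2 j
      rw [tc_inl]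
      simp only [List.map_cons, List.sum_cons, List.count_append]
      omega
    · rcases List.mem_cons.1 hy with rfl | hy
      · exact (List.prefix_append _ w).isInfix
      · exact (h3 y' hy).trans (List.suffix_append y w).isInfix

lemma key {x : SForm ℕ} {w : List ℕ} {m k : ℕ} (h : Mt x w) (hs : w.Pairwise (· ≤ ·))
    (hc : ntCount x ≤ m) (hk : 2 * m < k) (hall : ∀ i < k, tc i x ≠ 0) :
    ∃ j < k, tc j x = w.count j := by
  obtain ⟨ys, h1, h2, h3⟩ := h.gaps
  have hcard : ∀ y ∈ ys, (y.toFinset.filter (· < k)).card ≤ 2 := by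
    intro y hy
    rcases (y.toFinset.filter (· < k)).eq_empty_or_nonempty with he | hne
    · rw [he]; simp
    set s := y.toFinset.filter (· < k) with hsdef
    refine le_trans (Finset.card_le_card (t := {s.min' hne, s.max' hne}) ?_) Finset.card_le_two
    intro l hl
    by_contra hn
    simp only [Finset.mem_insert, Finset.mem_singleton, not_or] at hn
    have h4 := lt_of_le_of_ne (s.min'_le l hl) (Ne.symm hn.1)
    have h5 := lt_of_le_of_ne (s.le_max' l hl) hn.2
    have h6 := s.min'_mem hne
    have h7 := s.max'_mem hne
    generalize s.min' hne = a at *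
    generalize s.max' hne = b at *
    simp only [hsdef, Finset.mem_filter, List.mem_toFinset] at hl h6 h7
    obtain ⟨u, v, huv⟩ := h3 y hy
    have h8 := h2 l
    have h9 : y.count l ≤ (ys.map (List.count l)).sum :=
      List.le_sum_of_mem (List.mem_map_of_mem hy)
    have h10 := hall l hl.2
    rw [← huv] at hs h8
    rw [List.pairwise_append, List.pairwise_append] at hs
    obtain ⟨⟨-, -, hs1⟩, -, hs2⟩ := hs
    have h11 : u.count l = 0 := by
      rw [List.count_eq_zero]
      intro hm
      have := hs1 l hm a h6.1
      omega
    have h12 : v.count l = 0 := by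
      rw [List.count_eq_zero]
      intro hm
      have := hs2 b (by simp [h7.1]) l hm
      omega
    simp only [List.count_append] at h8
    omega
  have hu : ∀ zs : List (List ℕ), (∀ y ∈ zs, (y.toFinset.filter (· < k)).card ≤ 2) →
      (zs.flatten.toFinset.filter (· < k)).card ≤ 2 * zs.length := by
    intro zs
    induction zs with
    | nil => simp
    | cons y zs ih =>
      intro h
      have h4 := h y (by simp)
      have h5 := ih (fun y hy => h y (by simp [hy]))
      rw [List.flatten_cons, List.toFinset_append, Finset.filter_union]
      have := Finset.card_union_le (y.toFinset.filter (· < k)) (zs.flatten.toFinset.filter (· < k))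
      simp only [List.length_cons]
      omega
  have h4 := hu ys hcard
  have h5 : ∃ j ∈ Finset.range k, j ∉ ys.flatten.toFinset.filter (· < k) := by
    apply Finset.exists_mem_notMem_of_card_lt_card
    rw [Finset.card_range]
    omega
  obtain ⟨j, hj, hj'⟩ := h5
  rw [Finset.mem_range] at hj
  refine ⟨j, hj, ?_⟩
  rw [← h2 j]
  have : (ys.map (List.count j)).sum = 0 := by
    rw [List.sum_eq_zero_iff]
    intro c hc
    obtain ⟨y, hy, rfl⟩ := List.mem_map.1 hc
    rw [List.count_eq_zero]
    intro hjy
    apply hj'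
    simp only [Finset.mem_filter, List.mem_toFinset, List.mem_flatten]
    exact ⟨⟨y, hy, hjy⟩, hj⟩
  omega

lemma first_change {α : Type} {R : α → α → Prop} {Q : α → Prop} {x z : α}
    (h : Relation.ReflTransGen R x z) (hx : Q x) (hz : ¬ Q z) :
    ∃ a b, Relation.ReflTransGen R x a ∧ R a b ∧ Q a ∧ ¬ Q b ∧ Relation.ReflTransGen R b z := by
  induction h with
  | refl => exact absurd hx hz
  | @tail b c h1 h2 ih =>
    by_cases hb : Q b
    · exact ⟨b, c, h1, h2, hb, hz, .refl⟩
    · obtain ⟨a, b', h3, h4, h5, h6, h7⟩ := ih hb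
      exact ⟨a, b', h3, h4, h5, h6, h7.tail h2⟩

lemma stepsNB_stepsN {P : List (Rule ℕ)} {b : ℕ} (k : ℕ) : ∀ {x y : SForm ℕ},
    StepsNB P b k x y → StepsN P k x y ∧ (1 ≤ k → ntCount y ≤ b) := by
  induction k with
  | zero => intro x y h; exact ⟨h, by omega⟩
  | succ k ih =>
    intro x y h
    obtain ⟨z, h1, h2, h3⟩ := h
    obtain ⟨h4, h5⟩ := ih h3
    refine ⟨⟨z, h1, h4⟩, fun _ => ?_⟩
    rcases Nat.eq_zero_or_pos k with rfl | hk
    · cases h4; exact h2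
    · exact h5 hk

lemma tc_stepsN {P : List (Rule ℕ)} {B : ℕ} (hB : ∀ r ∈ P, r.2.length ≤ B) (a k : ℕ) :
    ∀ {x y : SForm ℕ}, StepsN P k x y → tc a y ≤ tc a x + k * B := by
  induction k with
  | zero => intro x y h; cases h; omega
  | succ k ih =>
    intro x y h
    obtain ⟨z, ⟨r, hr, u, v, rfl, rfl⟩, h2⟩ := h
    have h3 := ih h2
    have h4 : tc a r.2 ≤ B := le_trans List.count_le_length (le_trans (List.length_filterMap_le _ _) (hB r hr))
    simp only [tc_append, tc_inl] at h3 ⊢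
    rw [Nat.succ_mul]
    omega

lemma nt_stepsN {P : List (Rule ℕ)} {B : ℕ} (hB : ∀ r ∈ P, ∀ A, Sum.inl A ∈ r.2 → A < B) (k : ℕ) :
    ∀ {x y : SForm ℕ}, StepsN P k x y → (∀ A, Sum.inl A ∈ x → A < B) →
      (∀ A, Sum.inl A ∈ y → A < B) := by
  induction k with
  | zero => intro x y h; cases h; exact id
  | succ k ih =>
    intro x y h hx
    obtain ⟨z, ⟨r, hr, u, v, rfl, rfl⟩, h2⟩ := h
    refine ih h2 ?_
    intro A hA
    simp only [List.mem_append] at hA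
    rcases hA with (hA | hA) | hA
    · exact hx A (by simp [hA])
    · exact hB r hr A hA
    · exact hx A (by simp [hA])

lemma exists_bound (G : CDGS ℕ) : ∃ B, G.start < B ∧ ∀ i, ∀ r ∈ G.comp i, r.2.length ≤ B ∧
    ∀ A, Sum.inl A ∈ r.2 → A < B := by
  have hfin : Set.Finite {r | ∃ i, r ∈ G.comp i} := by
    have : {r | ∃ i, r ∈ G.comp i} = ⋃ i, {r | r ∈ G.comp i} := by ext; simp
    rw [this]
    exact Set.finite_iUnion (fun i => List.finite_toSet _)
  obtain ⟨B, hB⟩ := (hfin.image (fun r : Rule ℕ => r.2.length + (pat r.2).sum)).bddAbove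
  refine ⟨B + G.start + 1, by omega, fun i r hr => ?_⟩
  have h1 : r.2.length + (pat r.2).sum ≤ B := hB ⟨r, ⟨i, hr⟩, rfl⟩
  refine ⟨by omega, fun A hA => ?_⟩
  have : A ≤ (pat r.2).sum := by
    apply List.le_sum_of_mem
    unfold pat
    rw [List.mem_filterMap]
    exact ⟨_, hA, rfl⟩
  omega

lemma pat_length (x : SForm ℕ) : (pat x).length = ntCount x := by
  induction x with
  | nil => rfl
  | cons s x ih => cases s <;> simpa [pat, ntCount, List.filter_cons, List.filterMap_cons] using ih

lemma fin_pats (m B : ℕ) : Set.Finite {l : List ℕ | l.length ≤ m ∧ ∀ A ∈ l, A < B} := by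
  refine ((List.finite_length_le (Fin B) m).image (List.map Fin.val)).subset ?_
  rintro l ⟨h1, h2⟩
  refine ⟨l.pmap (fun A h => ⟨A, h⟩) h2, by simpa using h1, ?_⟩
  rw [List.map_pmap]
  simp

theorem lower {L : Set (List ℕ)} {m k : ℕ} {lf : Bool} (hm : 1 ≤ m) (hk : 2 * m < k)
    (W : ℕ → List ℕ)
    (hW : ∀ n, 1 ≤ n → W n ∈ L) (hs : ∀ n, (W n).Pairwise (· ≤ ·))
    (hc : ∀ n, ∀ j < k, (W n).count j = n)
    (hL : ∀ i < k, ∀ j < k, (∀ w ∈ L, w.count i ≤ w.count j) ∨ (∀ w ∈ L, w.count j ≤ w.count i)) :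
    L ∉ CDFamIndInf ℕ lf (tm m) m := by
  rintro ⟨G, -, hEq, hB⟩
  have hmem : ∀ w : List ℕ, w ≠ [] → (w ∈ G.lang (tm m) ↔ w ∈ L) := by
    intro w hw
    have := Set.ext_iff.1 hEq w
    simpa [hw] using this
  obtain ⟨B, hB0, hB1⟩ := exists_bound G
  have main : ∀ n, ∃ y i j, 1 ≤ n → (i < k ∧ j < k ∧
      Relation.TransGen (G.ModeStep (tm m)) [Sum.inl G.start] y ∧
      Relation.ReflTransGen (G.ModeStep (tm m)) y ((W n).map Sum.inr) ∧
      pat y ∈ {l : List ℕ | l.length ≤ m ∧ ∀ A ∈ l, A < B} ∧ tc i y < m * B + 1 ∧ tc j y = n) := by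
    intro n
    by_cases hn : 1 ≤ n
    swap
    · exact ⟨[], 0, 0, fun h => absurd h hn⟩
    have hne : W n ≠ [] := by
      intro h
      have := hc n 0 (by omega)
      rw [h] at this
      simp at this
      omega
    have h1 := hB ((hmem _ hne).2 (hW n hn))
    have h2 := h1.2.to_reflTransGen
    have h3 : Relation.ReflTransGen (fun x y => G.ModeStep (tm m) x y ∧ ntCount y ≤ m)
        [Sum.inl G.start] ((W n).map Sum.inr) := by
      refine Relation.ReflTransGen.mono ?_ _ _ h2
      rintro x y ⟨i, k', hk1, hk2, hk3⟩
      have h4 := stepsNB_stepsN k' hk1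
      have hk4 : k' = m := hk3
      exact ⟨⟨i, k', h4.1, hk2, hk3⟩, h4.2 (by omega)⟩
    obtain ⟨a, b, h4, h5, ⟨i, hi, hi0⟩, h7, h8⟩ := first_change (Q := fun x => ∃ i < k, tc i x = 0) h3
      ⟨0, by omega, rfl⟩ (by
        rintro ⟨i, hi, h⟩
        rw [tc_map, hc n i hi] at h
        omega)
    have mono1 : ∀ {x y}, Relation.ReflTransGen
        (fun x y => G.ModeStep (tm m) x y ∧ ntCount y ≤ m) x y →
        Relation.ReflTransGen (G.ModeStep (tm m)) x y := by
      intro x y h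
      exact Relation.ReflTransGen.mono (fun _ _ h => h.1) _ _ h
    have h9 := mono1 h4
    have h10 := mono1 h8
    push Not at h7
    obtain ⟨j, hj, hj'⟩ := key (Mt.rtg h10) (hs n) h5.2 hk h7
    have hnt : ∀ y, Relation.ReflTransGen (G.ModeStep (tm m)) [Sum.inl G.start] y →
        ∀ A, Sum.inl A ∈ y → A < B := by
      intro y hy
      induction hy with
      | refl => intro A hA; simp at hA; omega
      | tail _ h ih =>
        obtain ⟨i, k', h, -⟩ := h
        exact nt_stepsN (fun r hr => (hB1 i r hr).2) k' h ih
    refine ⟨b, i, j, fun _ => ⟨hi, hj, Relation.TransGen.tail' h9 h5.1, h10, ⟨?_, ?_⟩, ?_, ?_⟩⟩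
    · rw [pat_length]; exact h5.2
    · intro A hA
      unfold pat at hA
      rw [List.mem_filterMap] at hA
      obtain ⟨s, hs1, hs2⟩ := hA
      cases s with
      | inl A' =>
        simp at hs2
        subst hs2
        exact hnt b (h9.tail h5.1) _ hs1
      | inr a => simp at hs2
    · obtain ⟨c, k', h11, -, h12⟩ := h5.1
      have h13 : k' = m := h12
      subst h13
      have := tc_stepsN (fun r hr => (hB1 c r hr).1) i k' h11
      omega
    · rw [hj', hc n j hj]
  choose y I J hy using main
  let F : ℕ → List ℕ × ℕ × ℕ × ℕ := fun n => (pat (y n), I n, J n, tc (I n) (y n))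
  have hfin : Set.Finite ({l : List ℕ | l.length ≤ m ∧ ∀ A ∈ l, A < B} ×ˢ (Set.Iio k) ×ˢ
      (Set.Iio k) ×ˢ (Set.Iio (m * B + 1))) :=
    (fin_pats m B).prod ((Set.finite_Iio k).prod ((Set.finite_Iio k).prod (Set.finite_Iio _)))
  obtain ⟨n, hn, n', hn', hne, hF⟩ := Set.Infinite.exists_ne_map_eq_of_mapsTo (f := F)
    (Set.Ici_infinite (1 : ℕ)) (fun n hn => by
      obtain ⟨h1, h2, h3, h4, h5, h6, h7⟩ := hy n hn
      exact ⟨h5, h1, h2, h6⟩) hfin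
  have hn1 : 1 ≤ n := hn
  have hn1' : 1 ≤ n' := hn'
  have comb : ∀ n n', 1 ≤ n → 1 ≤ n' → F n = F n' → ∃ w ∈ L, w.count (I n) = n ∧ w.count (J n) = n' := by
    intro n n' hn hn' hF
    simp only [F, Prod.mk.injEq] at hF
    obtain ⟨f1, f2, f3, f4⟩ := hF
    obtain ⟨h1, h2, h3, h4, h5, h6, h7⟩ := hy n hn
    obtain ⟨h1', h2', h3', h4', h5', h6', h7'⟩ := hy n' hn'
    obtain ⟨z, hz1, hz2, hz3⟩ := rtg_mix h4 f1.symm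
    rw [pat_map] at hz2
    obtain ⟨w, rfl⟩ := pat_nil hz2
    have c1 := hz3 (I n)
    have c2 := hz3 (J n)
    simp only [tc_map] at c1 c2
    rw [hc n _ h1] at c1
    rw [hc n _ h2] at c2
    rw [← f2] at f4
    rw [← f3] at h7'
    have c3 : w.count (I n) = n := by omega
    have c4 : w.count (J n) = n' := by omega
    refine ⟨w, (hmem w ?_).1 (h3'.trans_left hz1), c3, c4⟩
    rintro rfl
    simp at c3
    omega
  obtain ⟨w, hw, w1, w2⟩ := comb n n' hn1 hn1' hF
  obtain ⟨v, hv, v1, v2⟩ := comb n' n hn1' hn1 hF.symm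
  simp only [F, Prod.mk.injEq] at hF
  rw [← hF.2.1] at v1
  rw [← hF.2.2.1] at v2
  obtain ⟨h1, h2, -⟩ := hy n hn1
  rcases hL _ h1 _ h2 with h | h
  · have := h w hw
    have := h v hv
    omega
  · have := h w hw
    have := h v hv
    omega

/-- Nonterminal count. -/
def nc (A : ℕ) (x : SForm ℕ) : ℕ := (pat x).count A

lemma nc_append (A : ℕ) (x y : SForm ℕ) : nc A (x ++ y) = nc A x + nc A y := by
  simp [nc, pat_append]

lemma nc_nil (A : ℕ) : nc A [] = 0 := rfl

lemma tc_nil (A : ℕ) : tc A [] = 0 := rfl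

lemma nc_inl (A B : ℕ) (x : SForm ℕ) :
    nc A (Sum.inl B :: x) = nc A x + if B = A then 1 else 0 := by
  have : pat (Sum.inl B :: x) = B :: pat x := rfl
  simp [nc, this, List.count_cons]

lemma nc_inr (A b : ℕ) (x : SForm ℕ) : nc A (Sum.inr b :: x) = nc A x := rfl

lemma tc_inr (a b : ℕ) (x : SForm ℕ) :
    tc a (Sum.inr b :: x) = tc a x + if b = a then 1 else 0 := by
  have : (Sum.inr b :: x : SForm ℕ).filterMap Sum.getRight? = b :: x.filterMap Sum.getRight? := rfl
  simp [tc, this, List.count_cons]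

lemma nc_zero {A : ℕ} {x : SForm ℕ} (h : Sum.inl A ∉ x) : nc A x = 0 := by
  unfold nc
  rw [List.count_eq_zero]
  intro hm
  unfold pat at hm
  rw [List.mem_filterMap] at hm
  obtain ⟨s, h1, h2⟩ := hm
  cases s with
  | inl B => simp at h2; subst h2; exact h h1
  | inr b => simp at h2

lemma nc_map_range (t i m : ℕ) : ∀ t' < 6, t < 6 →
    nc (6 * i + t) ((List.range m).flatMap (fun i => [Sum.inl (6 * i + t')])) =
      if t = t' ∧ i < m then 1 else 0 := by
  intro t' h1 h2
  induction m with
  | zero => simp [nc_nil]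
  | succ m ih =>
    rw [List.range_succ, List.flatMap_append, nc_append, ih]
    simp only [List.flatMap_cons, List.flatMap_nil, List.append_nil, nc_inl, nc_nil]
    split_ifs <;> omega

lemma tc_map_range (t l m : ℕ) :
    tc l ((List.range m).flatMap (fun i => [Sum.inl (6 * i + t)])) = 0 := by
  induction m with
  | zero => simp [tc_nil]
  | succ m ih =>
    rw [List.range_succ, List.flatMap_append, tc_append, ih]
    simp [tc_inl, tc_nil]

/-- Start word. -/
def sw (m : ℕ) : SForm ℕ :=
  (List.range m).flatMap (fun i => [Sum.inl (6 * i + 1)]) ++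
  (List.range m).flatMap (fun i => [Sum.inl (6 * i + 3)])

def P1 (m : ℕ) : List (Rule ℕ) :=
  (List.range m).map (fun i => (6 * i + 1, [Sum.inl (6 * i + 2)])) ++
  (List.range m).map (fun i => (6 * i + 4, [Sum.inl (6 * i + 4)])) ++
  (List.range m).map (fun i => (6 * i + 5, [Sum.inr (2 * (m + i)), Sum.inr (2 * (m + i) + 1)]))

def P2 (m : ℕ) : List (Rule ℕ) :=
  (List.range m).map (fun i => (6 * i + 3,
    [Sum.inr (2 * (m + i)), Sum.inl (6 * i + 4), Sum.inr (2 * (m + i) + 1)]))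

def P3 (m : ℕ) : List (Rule ℕ) :=
  (List.range m).map (fun i => (6 * i + 2,
    [Sum.inr (2 * i), Sum.inl (6 * i + 1), Sum.inr (2 * i + 1)])) ++
  (List.range m).map (fun i => (6 * i + 3, [Sum.inl (6 * i + 5)]))

def P4 (m : ℕ) : List (Rule ℕ) :=
  [(0, [Sum.inl 0]), (0, sw m)] ++
  (List.range m).map (fun i => (6 * i + 4, [Sum.inl (6 * i + 3)])) ++
  (List.range m).map (fun i => (6 * i + 2, [Sum.inr (2 * i), Sum.inr (2 * i + 1)]))

/-- The witness system. -/
def GG (m : ℕ) : CDGS ℕ where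
  deg := 4
  start := 0
  comp := ![P1 m, P2 m, P3 m, P4 m]

lemma GG_lamFree (m : ℕ) (hm : 1 ≤ m) : (GG m).LamFree := by
  obtain ⟨k, rfl⟩ : ∃ k, m = k + 1 := ⟨m - 1, by omega⟩
  intro i r hr
  change Fin 4 at i
  fin_cases i
  · change r ∈ P1 _ at hr
    simp only [P1, List.mem_append, List.mem_map] at hr
    rcases hr with (⟨i, -, rfl⟩ | ⟨i, -, rfl⟩) | ⟨i, -, rfl⟩ <;> simp
  · change r ∈ P2 _ at hr
    simp only [P2, List.mem_map] at hr
    rcases hr with ⟨i, -, rfl⟩; simp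
  · change r ∈ P3 _ at hr
    simp only [P3, List.mem_append, List.mem_map] at hr
    rcases hr with (⟨i, -, rfl⟩ | ⟨i, -, rfl⟩) <;> simp
  · change r ∈ P4 _ at hr
    simp only [P4, List.mem_append, List.mem_map, List.mem_cons, List.not_mem_nil, or_false] at hr
    rcases hr with ((rfl | rfl) | ⟨i, -, rfl⟩) | ⟨i, -, rfl⟩
    · simp
    · simp [sw, List.range_succ_eq_map]
    · simp
    · simp

lemma stepsN_rel {P : List (Rule ℕ)} {R : SForm ℕ → SForm ℕ → Prop} (hr : ∀ x, R x x)
    (ht : ∀ x y z, R x y → R y z → R x z) (h : ∀ x y, RStep P x y → R x y) (k : ℕ) :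
    ∀ {x y}, StepsN P k x y → R x y := by
  induction k with
  | zero => intro x y hs; cases hs; exact hr x
  | succ k ih =>
    intro x y hs
    obtain ⟨z, h1, h2⟩ := hs
    exact ht _ _ _ (h _ _ h1) (ih h2)

section
variable {m i : ℕ} {k : ℕ} {x y : SForm ℕ}

abbrev R1 (m i : ℕ) (x y : SForm ℕ) : Prop :=
    nc 0 y = nc 0 x ∧
    nc (6 * i + 1) y + nc (6 * i + 2) y = nc (6 * i + 1) x + nc (6 * i + 2) x ∧
    nc (6 * i + 3) y = nc (6 * i + 3) x ∧ nc (6 * i + 4) y = nc (6 * i + 4) x ∧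
    tc (2 * i) y = tc (2 * i) x ∧ tc (2 * i + 1) y = tc (2 * i + 1) x ∧
    nc (6 * i + 5) y + tc (2 * (m + i)) y = nc (6 * i + 5) x + tc (2 * (m + i)) x ∧
    nc (6 * i + 5) y + tc (2 * (m + i) + 1) y = nc (6 * i + 5) x + tc (2 * (m + i) + 1) x

lemma P1_rel (hi : i < m) (h : StepsN (P1 m) k x y) : R1 m i x y := by
  revert h
  refine stepsN_rel (R := R1 m i) ?_ ?_ ?_ k
  · intro x; simp [R1]
  · intro x y z h1 h2; omega
  · rintro x y ⟨r, hr, u, v, rfl, rfl⟩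
    simp only [P1, List.mem_append, List.mem_map, List.mem_range] at hr
    rcases hr with (⟨j, hj, rfl⟩ | ⟨j, hj, rfl⟩) | ⟨j, hj, rfl⟩ <;>
    simp only [R1, nc_append, tc_append, nc_inl, nc_inr, tc_inl, tc_inr, nc_nil, tc_nil] <;>
    (refine ⟨?_, ?_, ?_, ?_, ?_, ?_, ?_, ?_⟩ <;> (try split_ifs) <;> first | omega | contradiction)

abbrev R2 (m i : ℕ) (x y : SForm ℕ) : Prop :=
    nc 0 y = nc 0 x ∧
    nc (6 * i + 1) y = nc (6 * i + 1) x ∧ nc (6 * i + 2) y = nc (6 * i + 2) x ∧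
    nc (6 * i + 3) y + nc (6 * i + 4) y = nc (6 * i + 3) x + nc (6 * i + 4) x ∧
    nc (6 * i + 5) y = nc (6 * i + 5) x ∧
    tc (2 * i) y = tc (2 * i) x ∧ tc (2 * i + 1) y = tc (2 * i + 1) x ∧
    nc (6 * i + 3) y + tc (2 * (m + i)) y = nc (6 * i + 3) x + tc (2 * (m + i)) x ∧
    nc (6 * i + 3) y + tc (2 * (m + i) + 1) y = nc (6 * i + 3) x + tc (2 * (m + i) + 1) x

lemma P2_rel (hi : i < m) (h : StepsN (P2 m) k x y) : R2 m i x y := by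
  revert h
  refine stepsN_rel (R := R2 m i) ?_ ?_ ?_ k
  · intro x; simp [R2]
  · intro x y z h1 h2; omega
  · rintro x y ⟨r, hr, u, v, rfl, rfl⟩
    simp only [P2, List.mem_map, List.mem_range] at hr
    rcases hr with ⟨j, hj, rfl⟩
    simp only [R2, nc_append, tc_append, nc_inl, nc_inr, tc_inl, tc_inr, nc_nil, tc_nil]
    (refine ⟨?_, ?_, ?_, ?_, ?_, ?_, ?_, ?_, ?_⟩ <;> (try split_ifs) <;> first | omega | contradiction)

abbrev R3 (m i : ℕ) (x y : SForm ℕ) : Prop :=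
    nc 0 y = nc 0 x ∧
    nc (6 * i + 1) y + nc (6 * i + 2) y = nc (6 * i + 1) x + nc (6 * i + 2) x ∧
    nc (6 * i + 4) y = nc (6 * i + 4) x ∧
    nc (6 * i + 3) y + nc (6 * i + 5) y = nc (6 * i + 3) x + nc (6 * i + 5) x ∧
    nc (6 * i + 2) y + tc (2 * i) y = nc (6 * i + 2) x + tc (2 * i) x ∧
    nc (6 * i + 2) y + tc (2 * i + 1) y = nc (6 * i + 2) x + tc (2 * i + 1) x ∧
    tc (2 * (m + i)) y = tc (2 * (m + i)) x ∧
    tc (2 * (m + i) + 1) y = tc (2 * (m + i) + 1) x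

lemma P3_rel (hi : i < m) (h : StepsN (P3 m) k x y) : R3 m i x y := by
  revert h
  refine stepsN_rel (R := R3 m i) ?_ ?_ ?_ k
  · intro x; simp [R3]
  · intro x y z h1 h2; omega
  · rintro x y ⟨r, hr, u, v, rfl, rfl⟩
    simp only [P3, List.mem_append, List.mem_map, List.mem_range] at hr
    rcases hr with ⟨j, hj, rfl⟩ | ⟨j, hj, rfl⟩ <;>
    simp only [R3, nc_append, tc_append, nc_inl, nc_inr, tc_inl, tc_inr, nc_nil, tc_nil] <;>
    (refine ⟨?_, ?_, ?_, ?_, ?_, ?_, ?_, ?_⟩ <;> (try split_ifs) <;> first | omega | contradiction)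

lemma nc_sw (t : ℕ) (ht : t < 6) (hi : i < m) :
    nc (6 * i + t) (sw m) = if t = 1 ∨ t = 3 then 1 else 0 := by
  simp only [sw, nc_append]
  rw [nc_map_range _ _ _ 1 (by omega) ht, nc_map_range _ _ _ 3 (by omega) ht]
  split_ifs <;> omega

lemma nc0_sw : nc 0 (sw m) = 0 := by
  have h1 := nc_map_range 0 0 m 1 (by omega) (by omega)
  have h3 := nc_map_range 0 0 m 3 (by omega) (by omega)
  simp at h1 h3
  simp [sw, nc_append, h1, h3]

lemma tc_sw (l : ℕ) : tc l (sw m) = 0 := by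
  simp only [sw, tc_append, tc_map_range]

abbrev R4 (m i : ℕ) (x y : SForm ℕ) : Prop :=
    nc 0 y + nc (6 * i + 1) y = nc 0 x + nc (6 * i + 1) x ∧
    nc 0 y + nc (6 * i + 3) y + nc (6 * i + 4) y = nc 0 x + nc (6 * i + 3) x + nc (6 * i + 4) x ∧
    nc (6 * i + 5) y = nc (6 * i + 5) x ∧
    nc (6 * i + 2) y + tc (2 * i) y = nc (6 * i + 2) x + tc (2 * i) x ∧
    nc (6 * i + 2) y + tc (2 * i + 1) y = nc (6 * i + 2) x + tc (2 * i + 1) x ∧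
    tc (2 * (m + i)) y = tc (2 * (m + i)) x ∧
    tc (2 * (m + i) + 1) y = tc (2 * (m + i) + 1) x

lemma P4_rel (hi : i < m) (h : StepsN (P4 m) k x y) : R4 m i x y := by
  revert h
  refine stepsN_rel (R := R4 m i) ?_ ?_ ?_ k
  · intro x; simp [R4]
  · intro x y z h1 h2; omega
  · rintro x y ⟨r, hr, u, v, rfl, rfl⟩
    simp only [P4, List.mem_append, List.mem_map, List.mem_range, List.mem_cons,
      List.not_mem_nil, or_false] at hr
    have s1 := nc_sw (m := m) (i := i) 1 (by omega) hi
    have s2 := nc_sw (m := m) (i := i) 2 (by omega) hi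
    have s3 := nc_sw (m := m) (i := i) 3 (by omega) hi
    have s4 := nc_sw (m := m) (i := i) 4 (by omega) hi
    have s5 := nc_sw (m := m) (i := i) 5 (by omega) hi
    simp at s1 s2 s3 s4 s5
    rcases hr with ((rfl | rfl) | ⟨j, hj, rfl⟩) | ⟨j, hj, rfl⟩ <;>
    simp only [R4, nc_append, tc_append, nc_inl, nc_inr, tc_inl, tc_inr, nc_nil, tc_nil, tc_sw,
      nc0_sw, s1, s2, s3, s4, s5] <;>
    (refine ⟨?_, ?_, ?_, ?_, ?_, ?_, ?_⟩ <;> (try split_ifs) <;> first | omega | contradiction)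

/-- Total count of two classes. -/
def Dd (m t t' : ℕ) (x : SForm ℕ) : ℕ :=
  ∑ i ∈ Finset.range m, (nc (6 * i + t) x + nc (6 * i + t') x)

lemma Dd_append (m t t' : ℕ) (x y : SForm ℕ) : Dd m t t' (x ++ y) = Dd m t t' x + Dd m t t' y := by
  unfold Dd
  rw [← Finset.sum_add_distrib]
  refine Finset.sum_congr rfl fun i _ => ?_
  rw [nc_append, nc_append]; omega

lemma Dd_single (m t t' A : ℕ) (ht : t < 6) (ht' : t' < 6) (hne : t ≠ t') :
    Dd m t t' [Sum.inl A] ≤ 1 := by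
  calc Dd m t t' [Sum.inl A] ≤ ∑ i ∈ Finset.range m, (if A / 6 = i then 1 else 0) := by
        unfold Dd
        refine Finset.sum_le_sum fun i _ => ?_
        simp only [nc_inl, nc_nil]
        split_ifs <;> omega
    _ ≤ 1 := by
        rw [Finset.sum_ite_eq]
        split_ifs <;> omega

lemma Dd_stepsN {P : List (Rule ℕ)} (t t' : ℕ) (ht : t < 6) (ht' : t' < 6) (hne : t ≠ t')
    (k : ℕ) : ∀ {x y}, StepsN P k x y → Dd m t t' x ≤ Dd m t t' y + k := by
  induction k with
  | zero => intro x y h; cases h; omega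
  | succ k ih =>
    intro x y h
    obtain ⟨z, ⟨r, hr, u, v, rfl, rfl⟩, h2⟩ := h
    have h3 := ih h2
    have h4 := Dd_single m t t' r.1 ht ht' hne
    have : u ++ Sum.inl r.1 :: v = u ++ ([Sum.inl r.1] ++ v) := rfl
    rw [this]
    simp only [Dd_append] at h3 ⊢
    omega

lemma excl {P : List (Rule ℕ)} (hm : 1 ≤ m) (t t' a a' : ℕ) (ht : t < 6) (ht' : t' < 6)
    (hne : t ≠ t')
    (h : StepsN P m x y) (h1 : ∀ i < m, nc (6 * i + t) y = 0) (h2 : ∀ i < m, nc (6 * i + t') y = 0)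
    (h3 : ∀ i < m, nc (6 * i + t) x = a) (h4 : ∀ i < m, nc (6 * i + t') x = a') : a + a' ≤ 1 := by
  have h5 := Dd_stepsN (m := m) t t' ht ht' hne m h
  have h6 : Dd m t t' y = 0 := by
    unfold Dd
    apply Finset.sum_eq_zero
    intro i hi
    have := h1 i (Finset.mem_range.1 hi)
    have := h2 i (Finset.mem_range.1 hi)
    omega
  have h7 : Dd m t t' x = m * (a + a') := by
    unfold Dd
    rw [Finset.sum_congr rfl (g := fun _ => a + a')]
    · simp
    · intro i hi
      rw [h3 i (Finset.mem_range.1 hi), h4 i (Finset.mem_range.1 hi)]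
  rw [h6, h7] at h5
  by_contra hc
  have : m * 2 ≤ m * (a + a') := Nat.mul_le_mul_left m (by omega)
  omega

lemma t_zero {P : List (Rule ℕ)} {A : ℕ} {z : SForm ℕ} (hr : (A, z) ∈ P)
    (h : ¬ ∃ z, RStep P y z) : nc A y = 0 := by
  apply nc_zero
  intro hm
  obtain ⟨u, v, rfl⟩ := List.append_of_mem hm
  exact h ⟨u ++ z ++ v, (A, z), hr, u, v, rfl, rfl⟩

/-- Invariant. -/
def Inv (m : ℕ) (x : SForm ℕ) : Prop := ∃ s a a' b b' e p q : ℕ,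
  (nc 0 x = s ∧ ∀ i < m, nc (6 * i + 1) x = a ∧ nc (6 * i + 2) x = a' ∧ nc (6 * i + 3) x = b ∧
    nc (6 * i + 4) x = b' ∧ nc (6 * i + 5) x = e ∧ tc (2 * i) x = p ∧ tc (2 * i + 1) x = p ∧
    tc (2 * (m + i)) x = q ∧ tc (2 * (m + i) + 1) x = q) ∧
  (s = 1 → p = 0 ∧ q = 0) ∧ a + a' + s ≤ 1 ∧ b + b' + e + s ≤ 1 ∧ p ≤ q + 1 ∧
  (a = 1 → p ≤ q) ∧ (a' = 1 → p ≤ q) ∧ (a' = 1 → b' = 1 → p + 1 ≤ q) ∧ (b' = 1 → p ≤ q) ∧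
  (b = 0 → e = 0 → p ≤ q) ∧ (a + a' = 1 → b + b' + e = 1) ∧ (a' = 1 → e = 0)

lemma Inv_step (hm : 1 ≤ m) (hx : Inv m x) (h : (GG m).ModeStep (tm m) x y) : Inv m y := by
  obtain ⟨c, k, h1, h2, h3⟩ := h
  change k = m at h3
  subst h3
  change ¬ ∃ z, RStep ((GG k).comp c) y z at h2
  obtain ⟨s, a, a', b, b', e, p, q, ⟨hs, hx⟩, hok⟩ := hx
  change Fin 4 at c
  fin_cases c
  · change StepsN (P1 k) k x y at h1
    change ¬ ∃ z, RStep (P1 k) y z at h2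
    have t1 : ∀ i < k, nc (6 * i + 1) y = 0 := fun i hi =>
      t_zero (z := [Sum.inl (6 * i + 2)]) (by simp [P1, hi]) h2
    have t4 : ∀ i < k, nc (6 * i + 4) y = 0 := fun i hi =>
      t_zero (z := [Sum.inl (6 * i + 4)]) (by simp [P1, hi]) h2
    have t5 : ∀ i < k, nc (6 * i + 5) y = 0 := fun i hi =>
      t_zero (z := [Sum.inr (2 * (k + i)), Sum.inr (2 * (k + i) + 1)]) (by simp [P1, hi]) h2
    have hex := excl hm 1 5 a e (by omega) (by omega) (by omega) h1 t1 t5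
      (fun i hi => (hx i hi).1) (fun i hi => (hx i hi).2.2.2.2.1)
    have h0 := P1_rel (i := 0) (by omega) h1
    have hx0 := hx 0 (by omega)
    have t40 := t4 0 (by omega)
    refine ⟨s, 0, a + a', b, 0, 0, p, q + e, ⟨by omega, fun i hi => ?_⟩, ?_⟩
    · have := P1_rel hi h1
      have := hx i hi
      have := t1 i hi
      have := t4 i hi
      have := t5 i hi
      omega
    · have hb : b' = 0 := by omega
      clear hx h0 hx0 t1 t4 t5 h1 h2
      omega
  · change StepsN (P2 k) k x y at h1
    change ¬ ∃ z, RStep (P2 k) y z at h2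
    have t3 : ∀ i < k, nc (6 * i + 3) y = 0 := fun i hi =>
      t_zero (z := [Sum.inr (2 * (k + i)), Sum.inl (6 * i + 4), Sum.inr (2 * (k + i) + 1)])
        (by simp [P2, hi]) h2
    have h0 := P2_rel (i := 0) (by omega) h1
    refine ⟨s, a, a', 0, b + b', e, p, q + b, ⟨by omega, fun i hi => ?_⟩, ?_⟩
    · have := P2_rel hi h1
      have := hx i hi
      have := t3 i hi
      omega
    · clear hx h0 t3 h1 h2
      omega
  · change StepsN (P3 k) k x y at h1
    change ¬ ∃ z, RStep (P3 k) y z at h2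
    have t2 : ∀ i < k, nc (6 * i + 2) y = 0 := fun i hi =>
      t_zero (z := [Sum.inr (2 * i), Sum.inl (6 * i + 1), Sum.inr (2 * i + 1)])
        (by simp [P3, hi]) h2
    have t3 : ∀ i < k, nc (6 * i + 3) y = 0 := fun i hi =>
      t_zero (z := [Sum.inl (6 * i + 5)]) (by simp [P3, hi]) h2
    have hex := excl hm 2 3 a' b (by omega) (by omega) (by omega) h1 t2 t3
      (fun i hi => (hx i hi).2.1) (fun i hi => (hx i hi).2.2.1)
    have h0 := P3_rel (i := 0) (by omega) h1
    refine ⟨s, a + a', 0, 0, b', e + b, p + a', q, ⟨by omega, fun i hi => ?_⟩, ?_⟩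
    · have := P3_rel hi h1
      have := hx i hi
      have := t2 i hi
      have := t3 i hi
      omega
    · clear hx h0 t2 t3 h1 h2
      omega
  · change StepsN (P4 k) k x y at h1
    change ¬ ∃ z, RStep (P4 k) y z at h2
    have t0 : nc 0 y = 0 := t_zero (z := [Sum.inl 0]) (by simp [P4]) h2
    have t2 : ∀ i < k, nc (6 * i + 2) y = 0 := fun i hi =>
      t_zero (z := [Sum.inr (2 * i), Sum.inr (2 * i + 1)]) (by simp [P4, hi]) h2
    have t4 : ∀ i < k, nc (6 * i + 4) y = 0 := fun i hi =>
      t_zero (z := [Sum.inl (6 * i + 3)]) (by simp [P4, hi]) h2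
    have hex := excl hm 2 4 a' b' (by omega) (by omega) (by omega) h1 t2 t4
      (fun i hi => (hx i hi).2.1) (fun i hi => (hx i hi).2.2.2.1)
    refine ⟨0, a + s, 0, b + b' + s, 0, e, p + a', q, ⟨by omega, fun i hi => ?_⟩, ?_⟩
    · have := P4_rel hi h1
      have := hx i hi
      have := t2 i hi
      have := t4 i hi
      omega
    · clear hx t2 t4 h1 h2
      omega

end

lemma Inv_lang {m : ℕ} (hm : 1 ≤ m) {w : List ℕ} (hw : w ∈ (GG m).lang (tm m)) :
    ∃ p q, p ≤ q ∧ (∀ l < 2 * m, w.count l = p) ∧ ∀ l, 2 * m ≤ l → l < 4 * m → w.count l = q := by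
  have h := Relation.TransGen.to_reflTransGen hw
  have hi : ∀ y, Relation.ReflTransGen ((GG m).ModeStep (tm m)) [Sum.inl (GG m).start] y →
      Inv m y := by
    intro y hy
    induction hy with
    | refl =>
      refine ⟨1, 0, 0, 0, 0, 0, 0, 0, ⟨rfl, fun i hi => ?_⟩, by omega⟩
      change nc (6 * i + 1) [Sum.inl 0] = 0 ∧ nc (6 * i + 2) [Sum.inl 0] = 0 ∧
        nc (6 * i + 3) [Sum.inl 0] = 0 ∧ nc (6 * i + 4) [Sum.inl 0] = 0 ∧
        nc (6 * i + 5) [Sum.inl 0] = 0 ∧ _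
      simp only [nc_inl, nc_nil, tc_inl, tc_nil]
      simp
    | tail _ h ih => exact Inv_step hm ih h
  obtain ⟨s, a, a', b, b', e, p, q, ⟨hs, hx⟩, hok⟩ := hi _ h
  refine ⟨p, q, ?_, ?_, ?_⟩
  · have := hx 0 (by omega)
    simp only [nc, pat_map] at this
    simp at this
    omega
  · intro l hl
    have := hx (l / 2) (by omega)
    simp only [tc_map] at this
    rcases Nat.mod_two_eq_zero_or_one l with h | h
    · rw [← this.2.2.2.2.2.1]; congr 1; omega
    · rw [← this.2.2.2.2.2.2.1]; congr 1; omega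
  · intro l hl hl'
    have := hx (l / 2 - m) (by omega)
    simp only [tc_map] at this
    rcases Nat.mod_two_eq_zero_or_one l with h | h
    · rw [← this.2.2.2.2.2.2.2.1]; congr 1; omega
    · rw [← this.2.2.2.2.2.2.2.2]; congr 1; omega


/-- Block. -/
def blk (p : ℕ) (mid : SForm ℕ) (l : ℕ) : SForm ℕ :=
  List.replicate p (Sum.inr (2 * l)) ++ mid ++ List.replicate p (Sum.inr (2 * l + 1))

lemma blk_succ (p : ℕ) (mid : SForm ℕ) (l : ℕ) :
    blk p (Sum.inr (2 * l) :: (mid ++ [Sum.inr (2 * l + 1)])) l = blk (p + 1) mid l := by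
  unfold blk
  rw [List.replicate_succ' (n := p) (a := Sum.inr (2 * l)),
    List.replicate_succ (n := p) (a := Sum.inr (2 * l + 1))]
  simp

lemma rstep_ctx {P : List (Rule ℕ)} {x y : SForm ℕ} (h : RStep P x y) (u v : SForm ℕ) :
    RStep P (u ++ x ++ v) (u ++ y ++ v) := by
  obtain ⟨r, hr, u', v', rfl, rfl⟩ := h
  exact ⟨r, hr, u ++ u', v' ++ v, by simp, by simp⟩

lemma stepsN_ctx {P : List (Rule ℕ)} (k : ℕ) : ∀ {x y : SForm ℕ}, StepsN P k x y →
    ∀ (u v : SForm ℕ), StepsN P k (u ++ x ++ v) (u ++ y ++ v) := by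
  induction k with
  | zero => intro x y h u v; cases h; rfl
  | succ k ih =>
    intro x y h u v
    obtain ⟨z, h1, h2⟩ := h
    exact ⟨_, rstep_ctx h1 u v, ih h2 u v⟩

lemma rstep_blk {P : List (Rule ℕ)} {A : ℕ} {z : SForm ℕ} (h : (A, z) ∈ P) (p l : ℕ) :
    RStep P (blk p [Sum.inl A] l) (blk p z l) :=
  ⟨(A, z), h, List.replicate p (Sum.inr (2 * l)), List.replicate p (Sum.inr (2 * l + 1)),
    by simp [blk], by simp [blk]⟩

lemma stepsN_flatMap {P : List (Rule ℕ)} (f g : ℕ → SForm ℕ) : ∀ (l : List ℕ),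
    (∀ i ∈ l, RStep P (f i) (g i)) → StepsN P l.length (l.flatMap f) (l.flatMap g) := by
  intro l
  induction l with
  | nil => intro _; rfl
  | cons a l ih =>
    intro h
    refine ⟨g a ++ l.flatMap f, ?_, ?_⟩
    · have := rstep_ctx (h a (by simp)) [] (l.flatMap f)
      simpa using this
    · have := stepsN_ctx _ (ih (fun i hi => h i (by simp [hi]))) (g a) []
      simpa using this

/-- Middle word. -/
def md (t i : ℕ) : SForm ℕ := if t = 6 then [] else [Sum.inl (6 * i + t)]

/-- Sentential forms of the intended derivation. -/
def FF (m p t q t' : ℕ) : SForm ℕ :=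
  (List.range m).flatMap (fun i => blk p (md t i) i) ++
  (List.range m).flatMap (fun i => blk q (md t' i) (m + i))

lemma mem_FF {m p t q t' A : ℕ} (h : Sum.inl A ∈ FF m p t q t') (ht : t ≤ 6) (ht' : t' ≤ 6) :
    (A % 6 = t ∧ t < 6) ∨ (A % 6 = t' ∧ t' < 6) := by
  simp only [FF, List.mem_append, List.mem_flatMap, blk, List.mem_replicate, md] at h
  rcases h with ⟨i, -, h⟩ | ⟨i, -, h⟩
  · split_ifs at h
    · simp at h
    · simp at h; omega
  · split_ifs at h
    · simp at h
    · simp at h; omega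

lemma term_FF {P : List (Rule ℕ)} {m p t q t' : ℕ} (ht : t ≤ 6) (ht' : t' ≤ 6)
    (h : ∀ r ∈ P, (r.1 % 6 ≠ t ∨ t = 6) ∧ (r.1 % 6 ≠ t' ∨ t' = 6)) :
    ¬ ∃ z, RStep P (FF m p t q t') z := by
  rintro ⟨z, r, hr, u, v, h1, -⟩
  have : Sum.inl r.1 ∈ FF m p t q t' := by rw [h1]; simp
  have := mem_FF this ht ht'
  have := h r hr
  omega

lemma P1_heads {m : ℕ} {r : Rule ℕ} (h : r ∈ P1 m) : r.1 % 6 = 1 ∨ r.1 % 6 = 4 ∨ r.1 % 6 = 5 := by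
  simp only [P1, List.mem_append, List.mem_map] at h
  rcases h with (⟨i, -, rfl⟩ | ⟨i, -, rfl⟩) | ⟨i, -, rfl⟩ <;> dsimp only <;> omega

lemma P2_heads {m : ℕ} {r : Rule ℕ} (h : r ∈ P2 m) : r.1 % 6 = 3 := by
  simp only [P2, List.mem_map] at h
  rcases h with ⟨i, -, rfl⟩; dsimp only; omega

lemma P3_heads {m : ℕ} {r : Rule ℕ} (h : r ∈ P3 m) : r.1 % 6 = 2 ∨ r.1 % 6 = 3 := by
  simp only [P3, List.mem_append, List.mem_map] at h
  rcases h with ⟨i, -, rfl⟩ | ⟨i, -, rfl⟩ <;> dsimp only <;> omega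

lemma P4_heads {m : ℕ} {r : Rule ℕ} (h : r ∈ P4 m) : r.1 % 6 = 0 ∨ r.1 % 6 = 2 ∨ r.1 % 6 = 4 := by
  simp only [P4, List.mem_append, List.mem_map, List.mem_cons, List.not_mem_nil, or_false] at h
  rcases h with ((rfl | rfl) | ⟨i, -, rfl⟩) | ⟨i, -, rfl⟩ <;> dsimp only <;> omega

lemma ms {m : ℕ} {x y : SForm ℕ} (c : Fin 4) (h : StepsN ((GG m).comp c) m x y)
    (h2 : ¬ ∃ z, RStep ((GG m).comp c) y z) : (GG m).ModeStep (tm m) x y :=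
  ⟨c, m, h, h2, rfl⟩

lemma stA {P : List (Rule ℕ)} {m p p' t s q t' : ℕ}
    (h : ∀ i < m, RStep P (blk p (md t i) i) (blk p' (md s i) i)) :
    StepsN P m (FF m p t q t') (FF m p' s q t') := by
  have := stepsN_flatMap (P := P) (fun i => blk p (md t i) i) (fun i => blk p' (md s i) i)
    (List.range m) (fun i hi => h i (List.mem_range.1 hi))
  rw [List.length_range] at this
  simpa [FF] using stepsN_ctx _ this [] ((List.range m).flatMap (fun i => blk q (md t' i) (m + i)))

lemma stB {P : List (Rule ℕ)} {m p t q q' t' s : ℕ}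
    (h : ∀ i < m, RStep P (blk q (md t' i) (m + i)) (blk q' (md s i) (m + i))) :
    StepsN P m (FF m p t q t') (FF m p t q' s) := by
  have := stepsN_flatMap (P := P) (fun i => blk q (md t' i) (m + i))
    (fun i => blk q' (md s i) (m + i))
    (List.range m) (fun i hi => h i (List.mem_range.1 hi))
  rw [List.length_range] at this
  simpa [FF] using stepsN_ctx _ this ((List.range m).flatMap (fun i => blk p (md t i) i)) []

section
variable {m : ℕ}

lemma d0 (hm : 1 ≤ m) : (GG m).ModeStep (tm m) [Sum.inl 0] (FF m 0 1 0 3) := by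
  refine ms 3 (m := m) ?_ (term_FF (by omega) (by omega) fun r hr => ?_)
  · change StepsN (P4 m) m _ _
    have e : FF m 0 1 0 3 = sw m := by simp [FF, sw, blk, md]
    rw [e]
    have : ∀ k, StepsN (P4 m) (k + 1) [Sum.inl 0] (sw m) := by
      intro k
      induction k with
      | zero => exact ⟨sw m, ⟨(0, sw m), by simp [P4], [], [], by simp, by simp⟩, rfl⟩
      | succ k ih =>
        exact ⟨[Sum.inl 0], ⟨(0, [Sum.inl 0]), by simp [P4], [], [], by simp, by simp⟩, ih⟩
    obtain ⟨k, rfl⟩ : ∃ k, m = k + 1 := ⟨m - 1, by omega⟩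
    exact this k
  · have := P4_heads (m := m) hr; omega

lemma d1 {p q : ℕ} : (GG m).ModeStep (tm m) (FF m p 1 q 3) (FF m p 2 q 3) := by
  refine ms 0 (m := m) (stA fun i hi => ?_) (term_FF (by omega) (by omega) fun r hr => ?_)
  · exact rstep_blk (P := P1 m) (by simp [P1, hi, md]) p i
  · have := P1_heads (m := m) hr; omega

lemma d2 {p q : ℕ} : (GG m).ModeStep (tm m) (FF m p 2 q 3) (FF m p 2 (q + 1) 4) := by
  refine ms 1 (m := m) (stB fun i hi => ?_) (term_FF (by omega) (by omega) fun r hr => ?_)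
  · rw [← blk_succ]
    exact rstep_blk (P := P2 m) (by simp [P2, hi, md]) q (m + i)
  · have := P2_heads (m := m) hr; omega

lemma d3 {p q : ℕ} : (GG m).ModeStep (tm m) (FF m p 2 q 4) (FF m (p + 1) 1 q 4) := by
  refine ms 2 (m := m) (stA fun i hi => ?_) (term_FF (by omega) (by omega) fun r hr => ?_)
  · rw [← blk_succ]
    exact rstep_blk (P := P3 m) (by simp [P3, hi, md]) p i
  · have := P3_heads (m := m) hr; omega

lemma d4 {p q : ℕ} : (GG m).ModeStep (tm m) (FF m p 1 q 4) (FF m p 1 q 3) := by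
  refine ms 3 (m := m) (stB fun i hi => ?_) (term_FF (by omega) (by omega) fun r hr => ?_)
  · exact rstep_blk (P := P4 m) (by simp [P4, hi, md]) q (m + i)
  · have := P4_heads (m := m) hr; omega

lemma d5 {p q : ℕ} : (GG m).ModeStep (tm m) (FF m p 2 q 3) (FF m (p + 1) 6 q 3) := by
  refine ms 3 (m := m) (stA fun i hi => ?_) (term_FF (by omega) (by omega) fun r hr => ?_)
  · rw [← blk_succ]
    exact rstep_blk (P := P4 m) (by simp [P4, hi, md]) p i
  · have := P4_heads (m := m) hr; omega

lemma d6 {p q : ℕ} : (GG m).ModeStep (tm m) (FF m p 6 q 3) (FF m p 6 q 5) := by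
  refine ms 2 (m := m) (stB fun i hi => ?_) (term_FF (by omega) (by omega) fun r hr => ?_)
  · exact rstep_blk (P := P3 m) (by simp [P3, hi, md]) q (m + i)
  · have := P3_heads (m := m) hr; omega

lemma d7 {p q : ℕ} : (GG m).ModeStep (tm m) (FF m p 6 q 5) (FF m p 6 (q + 1) 6) := by
  refine ms 0 (m := m) (stB fun i hi => ?_) (term_FF (by omega) (by omega) fun r hr => ?_)
  · rw [← blk_succ]
    exact rstep_blk (P := P1 m) (by simp [P1, hi, md]) q (m + i)
  · have := P1_heads (m := m) hr; omega

lemma dloop (hm : 1 ≤ m) (p : ℕ) :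
    Relation.TransGen ((GG m).ModeStep (tm m)) [Sum.inl 0] (FF m p 1 p 3) := by
  induction p with
  | zero => exact .single (d0 hm)
  | succ p ih => exact (((ih.tail d1).tail d2).tail d3).tail d4

/-- Witness words. -/
def WW (N n : ℕ) : List ℕ :=
  (List.range N).flatMap (fun l => List.replicate n (2 * l) ++ List.replicate n (2 * l + 1))

lemma FF_WW (n : ℕ) : FF m n 6 n 6 = (WW (m + m) n).map Sum.inr := by
  simp [FF, WW, List.range_add, List.map_flatMap, blk, md, List.flatMap_map]

lemma WW_mem (hm : 1 ≤ m) (n : ℕ) (hn : 1 ≤ n) : WW (m + m) n ∈ (GG m).lang (tm m) := by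
  obtain ⟨p, rfl⟩ : ∃ p, n = p + 1 := ⟨n - 1, by omega⟩
  have := ((((dloop hm p).tail d1).tail d5).tail d6).tail d7
  rw [FF_WW] at this
  exact this

end

lemma WW_count (N n j : ℕ) : (WW N n).count j = if j < 2 * N then n else 0 := by
  induction N with
  | zero => simp [WW]
  | succ N ih =>
    unfold WW at ih ⊢
    rw [List.range_succ, List.flatMap_append, List.count_append, ih]
    simp only [List.flatMap_cons, List.flatMap_nil, List.append_nil, List.count_append,
      List.count_replicate, beq_iff_eq]
    split_ifs <;> omega

lemma WW_sorted (N n : ℕ) : (WW N n).Pairwise (· ≤ ·) := by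
  induction N with
  | zero => simp [WW]
  | succ N ih =>
    have hb : ∀ a ∈ WW N n, a < 2 * N := by
      intro a ha
      by_contra hc
      have h1 := WW_count N n a
      rw [if_neg hc, List.count_eq_zero] at h1
      exact h1 ha
    have e : WW (N + 1) n = WW N n ++ (List.replicate n (2 * N) ++ List.replicate n (2 * N + 1)) := by
      simp [WW, List.range_succ]
    rw [e, List.pairwise_append]
    refine ⟨ih, ?_, ?_⟩
    · rw [List.pairwise_append]
      refine ⟨by simp [List.pairwise_replicate], by simp [List.pairwise_replicate], ?_⟩
      intro a ha b hb
      have := List.eq_of_mem_replicate ha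
      have := List.eq_of_mem_replicate hb
      omega
    · intro a ha b hb'
      have h1 := hb a ha
      rcases List.mem_append.1 hb' with h | h
      · have := List.eq_of_mem_replicate h; omega
      · have := List.eq_of_mem_replicate h; omega

lemma not_ind {m : ℕ} (hm : 1 ≤ m) (lf : Bool) :
    (GG m).lang (tm m) ∉ CDFamIndInf ℕ lf (tm m) m := by
  refine lower (k := 4 * m) hm (by omega) (WW (m + m)) (WW_mem hm) (WW_sorted _) ?_ ?_
  · intro n j hj
    rw [WW_count, if_pos (by omega)]
  · intro i hi j hj
    by_cases h1 : i < 2 * m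
    · left
      intro w hw
      obtain ⟨p, q, hpq, ha, hb⟩ := Inv_lang hm hw
      rw [ha i h1]
      by_cases h2 : j < 2 * m
      · rw [ha j h2]
      · rw [hb j (by omega) hj]; exact hpq
    · right
      intro w hw
      obtain ⟨p, q, hpq, ha, hb⟩ := Inv_lang hm hw
      rw [hb i (by omega) hi]
      by_cases h2 : j < 2 * m
      · rw [ha j h2]; exact hpq
      · rw [hb j (by omega) hj]

/-- For every m ∈ ℕ (positive) and every n ≥ 4, as well as for an
unbounded number of components, L_m(CD_n, CF[−λ], (t∧=m)) ⊊ L(CD_n, CF[−λ], (t∧=m)),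
both with and without erasing rules. -/
theorem stmt18 (lf : Bool) (m : ℕ) (hm : 1 ≤ m) :
    (∀ n : ℕ, 4 ≤ n →
      CDFamInd ℕ lf n (Mode.conj Mode.t (Mode.eq m)) m ⊂
        CDFam ℕ lf n (Mode.conj Mode.t (Mode.eq m))) ∧
    CDFamIndInf ℕ lf (Mode.conj Mode.t (Mode.eq m)) m ⊂
      CDFamInf ℕ lf (Mode.conj Mode.t (Mode.eq m)) := by
  refine ⟨fun n hn => ⟨?_, fun h => ?_⟩, ⟨?_, fun h => ?_⟩⟩
  · rintro L ⟨G, h1, h2, h3, -⟩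
    exact ⟨G, h1, h2, h3⟩
  · obtain ⟨G, -, h2, h3, h4⟩ := h (show (GG m).lang (tm m) ∈ CDFam ℕ lf n (tm m) from
      ⟨GG m, hn, fun _ => GG_lamFree m hm, rfl⟩)
    exact not_ind hm lf ⟨G, h2, h3, h4⟩
  · rintro L ⟨G, h2, h3, -⟩
    exact ⟨G, h2, h3⟩
  · exact not_ind hm lf (h (show (GG m).lang (tm m) ∈ CDFamInf ℕ lf (tm m) from
      ⟨GG m, fun _ => GG_lamFree m hm, rfl⟩))

end CDHybrid
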